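/- Let M₀, B > 0. There exists a constant C > 0, depending only on M₀ and B, with the following property. Let u : ℝ² → ℂ be 2π-periodic and C¹ with |u|⁴ and ‖∇u‖² integrable on Q, and let n, v : ℝ² → ℝ be 2π-periodic with n², v² integrable on Q. Assume the Gagliardo–Nirenberg inequality ∫_Q |u|⁴ dx ≤ ( 2 M₀^{−1} ∫_Q ‖∇u‖² dx + B ∫_Q |u|² dx ) · ( ∫_Q |u|² dx ) and that ∫_Q |u|² dx = M₀. Then (1/2) ∫_Q (|u|² + n)² dx + (1/2) ∫_Q v² dx ≤ E(u,n,v) + M₀² B / 2 ≤ C ( ∫_Q |u|² + ∫_Q ‖∇u‖² + ∫_Q n² + ∫_Q v² ). -/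

import Mathlib

open MeasureTheory Real Set

noncomputable section

abbrev R2 := EuclideanSpace ℝ (Fin 2)

def Q2 : Set R2 := {x | ∀ i, x i ∈ Icc (-π) π}

def Periodic2 {E : Type*} (f : R2 → E) : Prop :=
  ∀ (x : R2) (k : Fin 2 → ℤ),
    f (x + (EuclideanSpace.equiv (Fin 2) ℝ).symm (fun i => 2 * π * (k i : ℝ))) = f x
/-- The Zakharov energy 𝓔(u,n,v). -/
noncomputable def zakharovEnergy (u : R2 → ℂ) (n v : R2 → ℝ) : ℝ :=
  (∫ x in Q2, ‖fderiv ℝ u x‖ ^ 2) + (1/2) * (∫ x in Q2, (n x) ^ 2)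
    + (1/2) * (∫ x in Q2, (v x) ^ 2) + ∫ x in Q2, n x * ‖u x‖ ^ 2
/-- Lemma 5.2(ii): at the critical mass the shifted energy controls ∫(|u|²+n)² + ‖v‖². -/
theorem stmt13 (M₀ B : ℝ) (hM : 0 < M₀) (hB : 0 < B) :
    ∃ C > 0, ∀ (u : R2 → ℂ) (n v : R2 → ℝ),
      Periodic2 u → Periodic2 n → Periodic2 v →
      Measurable n → Measurable v →
      ContDiff ℝ 1 u →
      IntegrableOn (fun x => ‖u x‖ ^ 4) Q2 →
      IntegrableOn (fun x => ‖fderiv ℝ u x‖ ^ 2) Q2 →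
      IntegrableOn (fun x => (n x) ^ 2) Q2 →
      IntegrableOn (fun x => (v x) ^ 2) Q2 →
      ((∫ x in Q2, ‖u x‖ ^ 4) ≤
        (2 * M₀⁻¹ * (∫ x in Q2, ‖fderiv ℝ u x‖ ^ 2) + B * (∫ x in Q2, ‖u x‖ ^ 2)) *
          (∫ x in Q2, ‖u x‖ ^ 2)) →
      (∫ x in Q2, ‖u x‖ ^ 2) = M₀ →
      (1/2) * (∫ x in Q2, (‖u x‖ ^ 2 + n x) ^ 2) + (1/2) * (∫ x in Q2, (v x) ^ 2)
          ≤ zakharovEnergy u n v + M₀ ^ 2 * B / 2 ∧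
        zakharovEnergy u n v + M₀ ^ 2 * B / 2
          ≤ C * ((∫ x in Q2, ‖u x‖ ^ 2) + (∫ x in Q2, ‖fderiv ℝ u x‖ ^ 2)
            + (∫ x in Q2, (n x) ^ 2) + (∫ x in Q2, (v x) ^ 2)) := by
  refine ⟨2 + M₀ * B, by positivity, ?_⟩
  intro u n v _ _ _ hn hv hu hu4 hG hN hV hGN hmass
  have hum : Measurable u := hu.continuous.measurable
  have hP : IntegrableOn (fun x => n x * ‖u x‖ ^ 2) Q2 := by
    refine Integrable.mono' (hN.add hu4) (hn.mul (hum.norm.pow_const 2)).aestronglyMeasurable ?_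
    refine Filter.Eventually.of_forall fun x => ?_
    simp only [Pi.add_apply]
    rw [Real.norm_eq_abs, abs_le]
    constructor <;>
      nlinarith [sq_nonneg (n x - ‖u x‖ ^ 2), sq_nonneg (n x + ‖u x‖ ^ 2), sq_nonneg (n x),
        sq_nonneg (‖u x‖ ^ 2)]
  have e1 : (∫ x in Q2, (‖u x‖ ^ 2 + n x) ^ 2)
      = (∫ x in Q2, ‖u x‖ ^ 4) + 2 * (∫ x in Q2, n x * ‖u x‖ ^ 2) + ∫ x in Q2, (n x) ^ 2 := by
    have hs : Integrable (fun x => ‖u x‖ ^ 4 + 2 * (n x * ‖u x‖ ^ 2)) (volume.restrict Q2) :=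
      Integrable.add hu4 (hP.const_mul 2)
    rw [← integral_const_mul, ← integral_add hu4 (hP.const_mul 2),
      ← integral_add hs hN]
    congr 1
    ext x
    ring
  have e2 : 2 * (∫ x in Q2, n x * ‖u x‖ ^ 2)
      ≤ (∫ x in Q2, ‖u x‖ ^ 4) + ∫ x in Q2, (n x) ^ 2 := by
    rw [← integral_const_mul, ← integral_add hu4 hN]
    refine integral_mono (hP.const_mul 2) (hu4.add hN) fun x => ?_
    simp only [Pi.add_apply]
    nlinarith [sq_nonneg (n x - ‖u x‖ ^ 2)]
  have gG : 0 ≤ ∫ x in Q2, ‖fderiv ℝ u x‖ ^ 2 := integral_nonneg fun x => sq_nonneg _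
  have gN : 0 ≤ ∫ x in Q2, (n x) ^ 2 := integral_nonneg fun x => sq_nonneg _
  have gV : 0 ≤ ∫ x in Q2, (v x) ^ 2 := integral_nonneg fun x => sq_nonneg _
  rw [e1]
  unfold zakharovEnergy
  rw [hmass] at hGN ⊢
  generalize (∫ x in Q2, ‖fderiv ℝ u x‖ ^ 2) = G at *
  generalize (∫ x in Q2, (n x) ^ 2) = N at *
  generalize (∫ x in Q2, (v x) ^ 2) = V at *
  generalize (∫ x in Q2, n x * ‖u x‖ ^ 2) = P at *
  generalize (∫ x in Q2, ‖u x‖ ^ 4) = A at *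
  have h : (2 * M₀⁻¹ * G + B * M₀) * M₀ = 2 * G + B * M₀ ^ 2 := by
    field_simp
  rw [h] at hGN
  have hMB : 0 < M₀ * B := mul_pos hM hB
  constructor
  · nlinarith
  · nlinarith [mul_nonneg hMB.le gG, mul_nonneg hMB.le gN, mul_nonneg hMB.le gV]
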